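/- Let I ⊂ (−π, π) be a closed set consisting of finitely many disjoint closed intervals, none of which is a singleton, let k be a positive integer, and fix a closed set I_0 contained in the one-dimensional interior of I. Then there exists C = C(I, I_0, k) > 0 such that for every n, every trigonometric polynomial T_n of degree at most n, and every t ∈ I_0, |T_n^{(k)}(t)| ≤ C n^{k} ‖T_n‖_I. -/

import Mathlib

open scoped Real

/-- A real trigonometric polynomial of degree at most `n`. -/
def IsTrigPoly (n : ℕ) (T : ℝ → ℝ) : Prop :=
  ∃ A B : ℕ → ℝ,
    T = fun t => ∑ j ∈ Finset.range (n + 1),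
      (A j * Real.cos (j * t) + B j * Real.sin (j * t))

/-- Sup-norm of a function over a set. -/
noncomputable def supNormR (f : ℝ → ℝ) (X : Set ℝ) : ℝ := ⨆ x ∈ X, |f x|

/-!
Near `t`, only the odd part `T (t + u) - T (t - u)` matters for `T' t`. Divided by `cos (u / 2)` it
is an algebraic polynomial in `sin (u / 2)` of degree at most `2 * n`, and `t` corresponds to the
centre of an interval on which it is controlled by `T`. There the derivative of a polynomial `p` of
degree at most `N` is of order `N` only: `p (cos z)` is entire of exponential type `N`, by the
maximum principle, so Cauchy's estimate applies on discs of radius `1 / N`. Since derivatives of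
trigonometric polynomials are again trigonometric polynomials of the same degree, higher derivatives
follow by iterating on shrinking intervals.
-/

section AlgebraicPolynomials

open Polynomial

variable {p : ℂ[X]} {N : ℕ} {M : ℝ}

lemma exists_differentiable_eval_cexp_eq_pow_mul_eval_cos (hp : p.natDegree ≤ N) :
    ∃ Q : ℂ → ℂ, Differentiable ℂ Q ∧
      ∀ z, Q (Complex.exp (z * Complex.I)) =
        Complex.exp (z * Complex.I) ^ N * p.eval (Complex.cos z) := by
  refine ⟨fun w ↦ ∑ k ∈ Finset.range (N + 1), p.coeff k * ((w ^ 2 + 1) / 2) ^ k * w ^ (N - k),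
    by fun_prop, fun z ↦ ?_⟩
  set w := Complex.exp (z * Complex.I) with hw
  have hcos : (w ^ 2 + 1) / 2 = w * Complex.cos z := by
    have hinv : w * Complex.exp (-z * Complex.I) = 1 := by
      rw [hw, ← Complex.exp_add, neg_mul, add_neg_cancel, Complex.exp_zero]
    rw [Complex.cos, ← hw]
    linear_combination -(1 / 2) * hinv
  rw [eval_eq_sum_range' (Nat.lt_succ_of_le hp), Finset.mul_sum]
  refine Finset.sum_congr rfl fun k hk ↦ ?_
  rw [hcos, ← pow_mul_pow_sub w (Finset.mem_range_succ_iff.1 hk)]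
  ring

lemma norm_eval_cos_le_mul_exp (hp : p.natDegree ≤ N)
    (hM : ∀ x ∈ Set.Icc (-1 : ℝ) 1, ‖p.eval (x : ℂ)‖ ≤ M) (z : ℂ) :
    ‖p.eval (Complex.cos z)‖ ≤ M * Real.exp (N * |z.im|) := by
  wlog hz : 0 ≤ z.im generalizing z
  · simpa using this (-z) (by simpa using (not_le.1 hz).le)
  obtain ⟨Q, hQ, hQcos⟩ := exists_differentiable_eval_cexp_eq_pow_mul_eval_cos hp
  have hcircle (w : ℂ) (hw : ‖w‖ = 1) : ‖Q w‖ ≤ M := by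
    have hw_exp : w = Complex.exp (w.arg * Complex.I) := by
      simpa [hw] using (Complex.norm_mul_exp_arg_mul_I w).symm
    rw [hw_exp, hQcos, norm_mul, norm_pow, Complex.norm_exp_ofReal_mul_I, one_pow, one_mul,
      ← Complex.ofReal_cos]
    exact hM _ (Real.cos_mem_Icc _)
  have hdisk (w : ℂ) (hw : ‖w‖ ≤ 1) : ‖Q w‖ ≤ M := by
    refine Complex.norm_le_of_forall_mem_frontier_norm_le (Metric.isBounded_ball (x := 0) (r := 1))
      hQ.diffContOnCl (fun u hu ↦ hcircle u ?_) ?_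
    · simpa [frontier_ball] using hu
    · simpa [closure_ball] using hw
  have hnorm : ‖Complex.exp (z * Complex.I)‖ = Real.exp (-z.im) := by simp [Complex.norm_exp]
  have hbound := hdisk (Complex.exp (z * Complex.I)) (by simpa [hnorm] using hz)
  rw [hQcos, norm_mul, norm_pow, hnorm, ← Real.exp_nat_mul, mul_neg, Real.exp_neg,
    inv_mul_le_iff₀ (Real.exp_pos _)] at hbound
  rwa [abs_of_nonneg hz, mul_comm M]

lemma norm_derivative_eval_cos_mul_sin_le (hp : p.natDegree ≤ N)
    (hM : ∀ x ∈ Set.Icc (-1 : ℝ) 1, ‖p.eval (x : ℂ)‖ ≤ M) (θ : ℝ) :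
    ‖p.derivative.eval (Complex.cos θ) * Complex.sin θ‖ ≤ Real.exp 1 * N * M := by
  rcases N.eq_zero_or_pos with rfl | hN
  · simp [derivative_of_natDegree_zero (Nat.le_zero.1 hp)]
  have hN' : (0 : ℝ) < N := by exact_mod_cast hN
  have hM0 : 0 ≤ M := (norm_nonneg _).trans (hM 0 (by simp))
  have hderiv : HasDerivAt (fun z ↦ p.eval (Complex.cos z))
      (p.derivative.eval (Complex.cos θ) * -Complex.sin θ) θ :=
    (p.hasDerivAt _).comp _ (Complex.hasDerivAt_cos _)
  have hdiff : Differentiable ℂ fun z ↦ p.eval (Complex.cos z) :=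
    p.differentiable.comp Complex.differentiable_cos
  have hsphere (z : ℂ) (hz : z ∈ Metric.sphere (θ : ℂ) (N : ℝ)⁻¹) :
      ‖p.eval (Complex.cos z)‖ ≤ Real.exp 1 * M := by
    have him : |z.im| ≤ (N : ℝ)⁻¹ := by
      simpa [← mem_sphere_iff_norm.1 hz] using Complex.abs_im_le_norm (z - θ)
    calc ‖p.eval (Complex.cos z)‖ ≤ M * Real.exp (N * |z.im|) := norm_eval_cos_le_mul_exp hp hM z
      _ ≤ M * Real.exp (N * (N : ℝ)⁻¹) := by gcongr
      _ = Real.exp 1 * M := by rw [mul_inv_cancel₀ hN'.ne', mul_comm]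
  have hcauchy := Complex.norm_deriv_le_of_forall_mem_sphere_norm_le (inv_pos.2 hN')
    hdiff.diffContOnCl hsphere
  rw [hderiv.deriv, mul_neg, norm_neg, div_inv_eq_mul] at hcauchy
  linarith

lemma norm_derivative_eval_center_le {c r : ℝ} (hr : 0 < r) (hp : p.natDegree ≤ N)
    (hM : ∀ x ∈ Set.Icc (c - r) (c + r), ‖p.eval (x : ℂ)‖ ≤ M) :
    ‖p.derivative.eval (c : ℂ)‖ ≤ Real.exp 1 * N * M / r := by
  set q := p.comp (C (r : ℂ) * X + C (c : ℂ)) with hq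
  have hqdeg : q.natDegree ≤ N := by
    grw [natDegree_comp_le, natDegree_linear_le, mul_one, hp]
  have hqM (x : ℝ) (hx : x ∈ Set.Icc (-1 : ℝ) 1) : ‖q.eval (x : ℂ)‖ ≤ M := by
    have := hM (r * x + c) ⟨by nlinarith [hx.1], by nlinarith [hx.2]⟩
    simpa [hq] using this
  have hbernstein := norm_derivative_eval_cos_mul_sin_le hqdeg hqM (π / 2)
  rw [← Complex.ofReal_cos, ← Complex.ofReal_sin, Real.cos_pi_div_two, Real.sin_pi_div_two]
    at hbernstein
  have hderiv : q.derivative.eval 0 = r * p.derivative.eval (c : ℂ) := by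
    simp [hq, derivative_comp]
  rw [Complex.ofReal_zero, Complex.ofReal_one, mul_one, hderiv, norm_mul,
    Complex.norm_of_nonneg hr.le] at hbernstein
  rwa [le_div_iff₀' hr]

lemma abs_derivative_eval_center_le {p : ℝ[X]} {c r : ℝ} (hr : 0 < r) (hp : p.natDegree ≤ N)
    (hM : ∀ x ∈ Set.Icc (c - r) (c + r), |p.eval x| ≤ M) :
    |p.derivative.eval c| ≤ Real.exp 1 * N * M / r := by
  have hnorm (q : ℝ[X]) (x : ℝ) : ‖(q.map Complex.ofRealHom).eval (x : ℂ)‖ = |q.eval x| := by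
    rw [← Complex.ofRealHom_eq_coe, eval_map_apply, Complex.ofRealHom_eq_coe,
      Complex.norm_real, Real.norm_eq_abs]
  rw [← hnorm, ← derivative_map]
  exact norm_derivative_eval_center_le hr (natDegree_map_le.trans hp) fun x hx ↦
    (hnorm p x).trans_le (hM x hx)

end AlgebraicPolynomials

lemma sin_two_mul_nat_mul_eq (j : ℕ) (v : ℝ) :
    Real.sin (2 * j * v) =
      Real.cos v * ((-1) ^ (j + 1) * (Polynomial.Chebyshev.U ℝ (2 * j - 1)).eval (Real.sin v)) := by
  have hU := Polynomial.Chebyshev.U_real_cos (π / 2 - v) (2 * j - 1)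
  rw [Real.cos_pi_div_two_sub, Real.sin_pi_div_two_sub] at hU
  have hangle : (((2 * j - 1 : ℤ) : ℝ) + 1) * (π / 2 - v) = j * π - 2 * j * v := by
    push_cast; ring
  rw [hangle, Real.sin_nat_mul_pi_sub] at hU
  have hsq : ((-1 : ℝ) ^ j) ^ 2 = 1 := by rw [← pow_mul, mul_comm, pow_mul]; simp
  rw [pow_succ]
  linear_combination (-1) ^ j * hU - Real.sin (2 * j * v) * hsq

lemma abs_le_div_cos_of_abs_cos_mul_sin_le {g : ℝ → ℝ} {α B : ℝ} (hα : α ∈ Set.Ico 0 (π / 2))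
    (hB : ∀ v ∈ Set.Icc (-α) α, |Real.cos v * g (Real.sin v)| ≤ B) {x : ℝ}
    (hx : x ∈ Set.Icc (-Real.sin α) (Real.sin α)) : |g x| ≤ B / Real.cos α := by
  have hsin : Set.SurjOn Real.sin (Set.Icc (-α) α) (Set.Icc (-Real.sin α) (Real.sin α)) := by
    rw [← Real.sin_neg]
    exact Real.continuousOn_sin.surjOn_Icc (by simp [hα.1]) (by simp [hα.1])
  obtain ⟨v, hv, rfl⟩ := hsin hx
  have hcos : 0 < Real.cos α := Real.cos_pos_of_mem_Ioo ⟨by linarith [hα.1, Real.pi_pos], hα.2⟩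
  have hcos_le : Real.cos α ≤ |Real.cos v| := by
    refine le_trans ?_ (le_abs_self _)
    rw [← Real.cos_abs v]
    exact Real.cos_le_cos_of_nonneg_of_le_pi (abs_nonneg v) (by linarith [hα.2, Real.pi_pos])
      (abs_le.2 hv)
  rw [le_div_iff₀' hcos]
  calc Real.cos α * |g (Real.sin v)| ≤ |Real.cos v| * |g (Real.sin v)| := by gcongr
    _ = |Real.cos v * g (Real.sin v)| := (abs_mul _ _).symm
    _ ≤ B := hB v hv

lemma four_mul_deriv_eq_eval_derivative {f : ℝ → ℝ} {t : ℝ} (hf : DifferentiableAt ℝ f t)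
    {G : Polynomial ℝ}
    (hG : ∀ v, f (t + 2 * v) - f (t - 2 * v) = Real.cos v * G.eval (Real.sin v)) :
    4 * deriv f t = G.derivative.eval 0 := by
  have hlin : HasDerivAt (fun v : ℝ ↦ 2 * v) 2 0 := hasDerivAt_const_mul _
  have hft : HasDerivAt f (deriv f t) t := hf.hasDerivAt
  have hleft : HasDerivAt (fun v ↦ f (t + 2 * v) - f (t - 2 * v))
      (deriv f t * 2 - deriv f t * -2) 0 :=
    (HasDerivAt.comp_of_eq 0 hft (hlin.const_add t) (by simp)).sub
      (HasDerivAt.comp_of_eq 0 hft (hlin.const_sub t) (by simp))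
  have hright := (Real.hasDerivAt_cos 0).fun_mul
    (HasDerivAt.comp_of_eq 0 (G.hasDerivAt 0) (Real.hasDerivAt_sin 0) Real.sin_zero.symm)
  have hunique := hleft.unique (funext hG ▸ hright)
  simp only [Function.comp_apply, Real.sin_zero, Real.cos_zero] at hunique
  linear_combination hunique

namespace IsTrigPoly

open Polynomial

variable {n : ℕ} {T : ℝ → ℝ}

lemma hasDerivAt_sum (A B : ℕ → ℝ) (t : ℝ) :
    HasDerivAt (fun t ↦ ∑ j ∈ Finset.range (n + 1),
        (A j * Real.cos (j * t) + B j * Real.sin (j * t)))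
      (∑ j ∈ Finset.range (n + 1),
        (j * B j * Real.cos (j * t) + -(j * A j) * Real.sin (j * t))) t := by
  refine HasDerivAt.fun_sum fun j _ ↦ ?_
  have hlin : HasDerivAt (fun t : ℝ ↦ j * t) (j : ℝ) t := hasDerivAt_const_mul _
  convert (hlin.cos.const_mul (A j)).fun_add (hlin.sin.const_mul (B j)) using 1
  ring

protected lemma differentiable (hT : IsTrigPoly n T) : Differentiable ℝ T := by
  obtain ⟨A, B, rfl⟩ := hT
  fun_prop

protected lemma deriv (hT : IsTrigPoly n T) : IsTrigPoly n (deriv T) := by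
  obtain ⟨A, B, rfl⟩ := hT
  exact ⟨fun j ↦ j * B j, fun j ↦ -(j * A j), funext fun t ↦ (hasDerivAt_sum A B t).deriv⟩

protected lemma periodic (hT : IsTrigPoly n T) : Function.Periodic T (2 * π) := by
  obtain ⟨A, B, rfl⟩ := hT
  intro t
  simp only [mul_add, Real.cos_add_nat_mul_two_pi, Real.sin_add_nat_mul_two_pi]

lemma exists_polynomial_sub_eq_cos_mul_eval_sin (hT : IsTrigPoly n T) (t : ℝ) :
    ∃ G : ℝ[X], G.natDegree ≤ 2 * n ∧
      ∀ v, T (t + 2 * v) - T (t - 2 * v) = Real.cos v * G.eval (Real.sin v) := by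
  obtain ⟨A, B, rfl⟩ := hT
  set b : ℕ → ℝ := fun j ↦ 2 * (B j * Real.cos (j * t) - A j * Real.sin (j * t))
  refine ⟨∑ j ∈ Finset.range (n + 1),
    C (b j * (-1) ^ (j + 1)) * Chebyshev.U ℝ (2 * j - 1), ?_, fun v ↦ ?_⟩
  · refine natDegree_sum_le_of_forall_le _ _ fun j hj ↦ ?_
    have hjn := Finset.mem_range_succ_iff.1 hj
    grw [natDegree_C_mul_le, Chebyshev.natDegree_U]
    omega
  · rw [eval_finsetSum, Finset.mul_sum, ← Finset.sum_sub_distrib]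
    refine Finset.sum_congr rfl fun j _ ↦ ?_
    have hsin := sin_two_mul_nat_mul_eq j v
    rw [eval_C_mul, mul_add (j : ℝ), mul_sub (j : ℝ), Real.cos_add, Real.cos_sub,
      Real.sin_add, Real.sin_sub, ← mul_assoc, mul_comm (j : ℝ) 2]
    linear_combination b j * hsin

lemma abs_deriv_le (hT : IsTrigPoly n T) {δ : ℝ} (hδ : 0 < δ) (hδπ : δ < π) {t M : ℝ}
    (hM : ∀ s ∈ Set.Icc (t - δ) (t + δ), |T s| ≤ M) :
    |deriv T t| ≤ 2 * Real.exp 1 * n / Real.sin δ * M := by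
  obtain ⟨G, hGdeg, hG⟩ := hT.exists_polynomial_sub_eq_cos_mul_eval_sin t
  have hcos : 0 < Real.cos (δ / 2) := Real.cos_pos_of_mem_Ioo ⟨by linarith, by linarith⟩
  have hsin : 0 < Real.sin (δ / 2) := Real.sin_pos_of_pos_of_lt_pi (by linarith) (by linarith)
  have hGM (x : ℝ) (hx : x ∈ Set.Icc (0 - Real.sin (δ / 2)) (0 + Real.sin (δ / 2))) :
      |G.eval x| ≤ 2 * M / Real.cos (δ / 2) := by
    rw [zero_sub, zero_add] at hx
    refine abs_le_div_cos_of_abs_cos_mul_sin_le (g := G.eval) ⟨by linarith, by linarith⟩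
      (fun v hv ↦ ?_) hx
    rw [← hG, two_mul M]
    exact (abs_sub _ _).trans (add_le_add
      (hM _ ⟨by linarith [hv.1], by linarith [hv.2]⟩)
      (hM _ ⟨by linarith [hv.2], by linarith [hv.1]⟩))
  have hsin_two : Real.sin δ = 2 * Real.sin (δ / 2) * Real.cos (δ / 2) := by
    rw [← Real.sin_two_mul, mul_div_cancel₀ _ two_ne_zero]
  calc |deriv T t| = |G.derivative.eval 0| / 4 := by
        rw [← four_mul_deriv_eq_eval_derivative (hT.differentiable t) hG, abs_mul,
          abs_of_pos (four_pos : (0 : ℝ) < 4)]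
        ring
    _ ≤ Real.exp 1 * (2 * n : ℕ) * (2 * M / Real.cos (δ / 2)) / Real.sin (δ / 2) / 4 := by
        gcongr
        exact abs_derivative_eval_center_le hsin hGdeg hGM
    _ = 2 * Real.exp 1 * n / Real.sin δ * M := by
        rw [hsin_two]
        push_cast
        field_simp
        ring

lemma abs_iteratedDeriv_le (hT : IsTrigPoly n T) {η : ℝ} (hη : 0 < η) (hηπ : η < π) (k : ℕ)
    {t M : ℝ} (hM : ∀ s ∈ Set.Icc (t - k * η) (t + k * η), |T s| ≤ M) :
    |iteratedDeriv k T t| ≤ (2 * Real.exp 1 * n / Real.sin η) ^ k * M := by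
  induction k generalizing T M with
  | zero => simpa using hM t (by simp)
  | succ k ih =>
    rw [iteratedDeriv_succ', pow_succ, mul_assoc]
    refine ih hT.deriv fun s hs ↦ hT.abs_deriv_le hη hηπ fun u hu ↦ hM u ?_
    push_cast
    constructor <;> linarith [hs.1, hs.2, hu.1, hu.2]

end IsTrigPoly

lemma abs_le_supNormR {f : ℝ → ℝ} {X : Set ℝ} (hf : Bornology.IsBounded (f '' X)) {s : ℝ}
    (hs : s ∈ X) : |f s| ≤ supNormR f X := by
  obtain ⟨R, hR⟩ := hf.exists_norm_le
  have hbdd : BddAbove (Set.range fun x ↦ ⨆ _ : x ∈ X, |f x|) := by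
    refine ⟨R, Set.forall_mem_range.2 fun x ↦ Real.iSup_le (fun hx ↦ hR _ ⟨x, hx, rfl⟩) ?_⟩
    exact (norm_nonneg _).trans (hR _ ⟨s, hs, rfl⟩)
  simpa only [supNormR, hs, ciSup_unique] using le_ciSup hbdd s

theorem stmt_3_general {I I₀ : Set ℝ} (hI₀ : IsCompact I₀) (hI₀I : I₀ ⊆ interior I) (k : ℕ) :
    ∃ C > (0 : ℝ), ∀ n : ℕ, ∀ T : ℝ → ℝ, IsTrigPoly n T →
      ∀ t ∈ I₀, |iteratedDeriv k T t| ≤ C * (n : ℝ) ^ k * supNormR T I := by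
  obtain ⟨δ, hδ, hδI⟩ := hI₀.exists_cthickening_subset_open isOpen_interior hI₀I
  obtain ⟨η, hη, hη_lt⟩ := exists_between (lt_min (by positivity : 0 < δ / (k + 1)) Real.pi_pos)
  have hηδ : k * η ≤ δ := by
    have := (lt_div_iff₀' (by positivity)).1 (hη_lt.trans_le (min_le_left _ _))
    linarith
  have hηπ : η < π := hη_lt.trans_le (min_le_right _ _)
  have hsin : 0 < Real.sin η := Real.sin_pos_of_pos_of_lt_pi hη hηπ
  refine ⟨(2 * Real.exp 1 / Real.sin η) ^ k, by positivity, fun n T hT t ht ↦ ?_⟩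
  rw [← mul_pow, div_mul_eq_mul_div]
  refine hT.abs_iteratedDeriv_le hη hηπ k fun s hs ↦ ?_
  have hbdd : Bornology.IsBounded (Set.range T) :=
    hT.periodic.isBounded_of_continuous Real.two_pi_pos.ne' hT.differentiable.continuous
  refine abs_le_supNormR (hbdd.subset (Set.image_subset_range T I)) ?_
  refine interior_subset (hδI (Metric.mem_cthickening_of_dist_le s t δ I₀ ht ?_))
  rw [Real.dist_eq, abs_le]
  constructor <;> linarith [hs.1, hs.2]

/-- rough Bernstein-type inequality on a finite union of intervals,
away from the endpoints. -/
theorem stmt_3 (m : ℕ) (c d : Fin m → ℝ)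
    (hcd : ∀ j, c j < d j)
    (hsub : ∀ j, Set.Icc (c j) (d j) ⊆ Set.Ioo (-π) π)
    (hdisj : ∀ i j, i ≠ j → Disjoint (Set.Icc (c i) (d i)) (Set.Icc (c j) (d j)))
    (I : Set ℝ) (hI : I = ⋃ j, Set.Icc (c j) (d j))
    (k : ℕ) (hk : 0 < k)
    (I₀ : Set ℝ) (hI₀closed : IsClosed I₀) (hI₀ : I₀ ⊆ interior I) :
    ∃ C > (0 : ℝ), ∀ n : ℕ, ∀ T : ℝ → ℝ, IsTrigPoly n T →
      ∀ t ∈ I₀, |iteratedDeriv k T t| ≤ C * (n : ℝ) ^ k * supNormR T I := by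
  have hIc : IsCompact I := hI ▸ isCompact_iUnion fun _ ↦ isCompact_Icc
  exact stmt_3_general (hIc.of_isClosed_subset hI₀closed (hI₀.trans interior_subset)) hI₀ k
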